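/- Let n ≥ 1 and let f be an integrable function on ℝ^n. Then ∫_{ℝ^n} Ψ(x, M^loc f(x)) dx < ∞ (i.e., M^loc f belongs to L_log(ℝ^n)) if and only if ∫_{ℝ^n} |f(x)| ( 1 + ln₊( ln(e+|f(x)|) / ln(e+|x|) ) ) dx < ∞. -/

import Mathlib

open MeasureTheory Real Set Metric ENNReal

noncomputable section

/-- `ℝ^n` with the Euclidean norm. -/
abbrev En (n : ℕ) := EuclideanSpace ℝ (Fin n)

/-- `ln₊ t = max (ln t) 0`. -/
def lnp (t : ℝ) : ℝ := max (Real.log t) 0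

/-- The unit cube `Q = (-1/2, 1/2)^n`. -/
def unitQ (n : ℕ) : Set (En n) := {x | ∀ i, -(1/2 : ℝ) < x i ∧ x i < 1/2}

/-- The dilate `φ_t(y) = t^{-n} φ(y/t)` convolved with `f` at `x`:
`(φ_t ∗ f)(x) = ∫ t^{-n} φ((x-y)/t) f(y) dy`. -/
def phiConv (n : ℕ) (φ f : En n → ℝ) (t : ℝ) (x : En n) : ℝ :=
  ∫ y, (t ^ n)⁻¹ * φ (t⁻¹ • (x - y)) * f y

/-- The maximal function `𝓜_φ f(x) = sup_{t>0} |(φ_t ∗ f)(x)|`. -/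
def Mphi (n : ℕ) (φ f : En n → ℝ) (x : En n) : ℝ :=
  ⨆ t : {t : ℝ // 0 < t}, |phiConv n φ f t.1 x|

/-- A smooth function supported in the closed unit ball with integral `1`. -/
def IsTestFun (n : ℕ) (φ : En n → ℝ) : Prop :=
  ContDiff ℝ (⊤ : ℕ∞) φ ∧ (∀ x, x ∉ Metric.closedBall (0 : En n) 1 → φ x = 0) ∧ (∫ x, φ x) = 1

/-- Membership in the Hardy space `H^1(ℝ^n)`: the maximal function `𝓜_φ f` is
integrable for every admissible `φ`. -/
def MemH1 (n : ℕ) (f : En n → ℝ) : Prop :=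
  ∀ φ : En n → ℝ, IsTestFun n φ → Integrable (Mphi n φ f)

/-- The cube `Q_k = k + Q` for `k ∈ ℤ^n`. -/
def Qk (n : ℕ) (k : Fin n → ℤ) : Set (En n) :=
  {x | ∀ i, (k i : ℝ) - 1/2 < x i ∧ x i < (k i : ℝ) + 1/2}

/-- The lattice point `k ∈ ℤ^n` viewed as a point of `ℝ^n`. -/
def zv (n : ℕ) (k : Fin n → ℤ) : En n :=
  (EuclideanSpace.equiv (Fin n) ℝ).symm (fun i => (k i : ℝ))

/-- `μ_k = ‖f_k‖_{L^1} = ∫_{Q_k} |f|`. -/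
def muk (n : ℕ) (f : En n → ℝ) (k : Fin n → ℤ) : ℝ := ∫ x in Qk n k, |f x|

/-- The local Hardy–Littlewood maximal function
`M^loc f(x) = sup_{0<r<1} r^{-n} ∫_{|y-x|<r} |f(y)| dy`. -/
def Mloc (n : ℕ) (f : En n → ℝ) (x : En n) : ℝ :=
  ⨆ r : Set.Ioo (0 : ℝ) 1, ((r : ℝ) ^ n)⁻¹ * ∫ y in Metric.ball x (r : ℝ), |f y|

/-- The Musielak function `Ψ(x,t) = t / (ln(e+t) + ln(e+|x|))` defining `L_log`. -/
def Psi (n : ℕ) (x : En n) (t : ℝ) : ℝ :=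
  t / (Real.log (Real.exp 1 + t) + Real.log (Real.exp 1 + ‖x‖))

/-!
Up to constants, `Ψ(x, t)` is the integral of the weight `(ln (e + s) + ln (e + |x|))⁻¹` over
`s ∈ (0, t)`, so `∫ Ψ(x, M f(x)) dx` is a weighted integral of the level sets `{M f > s}`. The
weight changes at most by a constant factor when `x` moves by a distance at most `6`, so that the
weak type inequality for the local maximal function and its converse, proved by covering with
balls of radius at most `1`, hold with the weight inserted: the weighted measure of `{M f > s}` is
comparable to the weighted integral of `|f| / s` over `{|f| > s}`. Integrating in `s` leaves the
integral of `(s (ln (e + s) + ln (e + |x|)))⁻¹` up to `|f(x)|`, which is of the order of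
`1 + ln₊ (ln (e + |f(x)|) / ln (e + |x|))`. The weak type inequality is used only for levels `s`
above a power of `1 + |x|` that is integrable in `x`, and its converse only for levels above a
multiple of `‖f‖₁`, at which the balls of the covering have radius less than `1`.
-/

open Module (finrank)
open scoped NNReal

/-! ### The Musielak function and logarithmic integrals -/

/-- The logarithm `ln (e + t)`, shifted so that it is at least `1` for `t ≥ 0`. -/
def elog (t : ℝ) : ℝ :=
  Real.log (Real.exp 1 + t)

theorem exp_one_add_pos {t : ℝ} (ht : 0 ≤ t) : 0 < Real.exp 1 + t := by positivity

theorem one_le_elog {t : ℝ} (ht : 0 ≤ t) : 1 ≤ elog t := by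
  rw [elog, Real.le_log_iff_exp_le (exp_one_add_pos ht)]
  exact le_add_of_nonneg_right ht

theorem elog_pos {t : ℝ} (ht : 0 ≤ t) : 0 < elog t :=
  one_pos.trans_le (one_le_elog ht)

theorem elog_le_elog {s t : ℝ} (hs : 0 ≤ s) (hst : s ≤ t) : elog s ≤ elog t :=
  Real.log_le_log (exp_one_add_pos hs) (add_le_add_right hst _)

theorem elog_mul_le_log_add_elog {c t : ℝ} (hc : 1 ≤ c) (ht : 0 ≤ t) :
    elog (c * t) ≤ Real.log c + elog t := by
  have hc₀ : 0 < c := one_pos.trans_le hc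
  rw [elog, elog, ← Real.log_mul hc₀.ne' (exp_one_add_pos ht).ne']
  refine Real.log_le_log (exp_one_add_pos (by positivity)) ?_
  rw [mul_add]
  gcongr
  exact le_mul_of_one_le_left (Real.exp_pos 1).le hc

theorem elog_mul_le {c t : ℝ} (hc : 1 ≤ c) (ht : 0 ≤ t) : elog (c * t) ≤ c * elog t := by
  have h_log := Real.log_le_sub_one_of_pos (one_pos.trans_le hc)
  nlinarith [elog_mul_le_log_add_elog hc ht, one_le_elog ht]

theorem elog_add_le {s t : ℝ} (hs : 0 ≤ s) (ht : 0 ≤ t) : elog (s + t) ≤ elog s + t := by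
  have h_exp : 1 ≤ Real.exp 1 + s := by linarith [Real.add_one_le_exp 1]
  rw [elog, elog, Real.log_le_iff_le_exp (by positivity), Real.exp_add,
    Real.exp_log (exp_one_add_pos hs)]
  calc Real.exp 1 + (s + t) ≤ (Real.exp 1 + s) * (t + 1) := by nlinarith
    _ ≤ (Real.exp 1 + s) * Real.exp t := by gcongr; exact Real.add_one_le_exp t

theorem hasDerivAt_elog {t : ℝ} (ht : 0 ≤ t) :
    HasDerivAt elog (Real.exp 1 + t)⁻¹ t := by
  rw [← one_div]
  exact ((hasDerivAt_id t).const_add (Real.exp 1)).log (exp_one_add_pos ht).ne'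

@[fun_prop]
theorem measurable_elog : Measurable elog :=
  Real.measurable_log.comp (measurable_const.add measurable_id)

/-- The function `t / (ln (e + t) + L)`. The Musielak function `Ψ(x, t)` defining `L_log` is
the case `L = ln (e + |x|)`. -/
def musielak (L t : ℝ) : ℝ :=
  t / (elog t + L)

theorem musielak_mul_le {L c t : ℝ} (hL : 1 ≤ L) (hc : 0 ≤ c) (ht : 0 ≤ t) :
    musielak L (c * t) ≤ max 1 c * musielak L t := by
  have h_t := one_le_elog ht
  have h_ct := one_le_elog (mul_nonneg hc ht)
  rw [musielak, musielak, ← mul_div_assoc, div_le_div_iff₀ (by linarith) (by linarith)]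
  rcases le_total 1 c with hc₁ | hc₁
  · rw [max_eq_right hc₁]
    gcongr
    exact elog_le_elog ht (le_mul_of_one_le_left ht hc₁)
  rw [max_eq_left hc₁, one_mul, mul_assoc, mul_left_comm]
  refine mul_le_mul_of_nonneg_left ?_ ht
  rcases hc.eq_or_lt with rfl | hc₀
  · rw [zero_mul]
    linarith
  have h_elog : elog t ≤ Real.log c⁻¹ + elog (c * t) := by
    simpa [hc₀.ne'] using
      elog_mul_le_log_add_elog ((one_le_inv₀ hc₀).2 hc₁) (mul_nonneg hc ht)
  have h_log : c * Real.log c⁻¹ ≤ 1 - c := by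
    calc c * Real.log c⁻¹ ≤ c * (c⁻¹ - 1) := by
          gcongr; exact Real.log_le_sub_one_of_pos (inv_pos.2 hc₀)
      _ = 1 - c := by field_simp
  nlinarith

/-- The weight `(ln (e + s) + L)⁻¹`, whose integral over `(0, t)` is comparable to
`musielak L t`. -/
def logWeight (L s : ℝ) : ℝ≥0∞ :=
  ENNReal.ofReal (elog s + L)⁻¹

theorem measurable_logWeight : Measurable (Function.uncurry logWeight) := by
  unfold Function.uncurry logWeight
  fun_prop

theorem logWeight_le_logWeight {L s t : ℝ} (hL : 1 ≤ L) (hs : 0 ≤ s) (hst : s ≤ t) :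
    logWeight L t ≤ logWeight L s := by
  have := one_le_elog hs
  refine ENNReal.ofReal_le_ofReal (inv_anti₀ (by linarith) ?_)
  gcongr
  exact elog_le_elog hs hst

theorem ofReal_musielak_le {L θ t : ℝ} (hL : 1 ≤ L) (hθ : 0 ≤ θ) (ht : 0 ≤ t) :
    ENNReal.ofReal (musielak L t) ≤ ENNReal.ofReal θ + ∫⁻ s in Ioo θ t, logWeight L s := by
  have h_elog := one_le_elog ht
  have h_weight : (elog t + L)⁻¹ ≤ 1 := inv_le_one_of_one_le₀ (by linarith)
  calc ENNReal.ofReal (musielak L t)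
      ≤ ENNReal.ofReal (θ + (elog t + L)⁻¹ * (t - θ)) := by
        gcongr
        rw [musielak, div_eq_inv_mul]
        nlinarith
    _ ≤ ENNReal.ofReal θ + logWeight L t * ENNReal.ofReal (t - θ) :=
        ENNReal.ofReal_add_le.trans_eq (by
          rw [ENNReal.ofReal_mul (inv_nonneg.2 (by linarith)), logWeight])
    _ = ENNReal.ofReal θ + ∫⁻ _ in Ioo θ t, logWeight L t := by
        rw [setLIntegral_const, Real.volume_Ioo]
    _ ≤ ENNReal.ofReal θ + ∫⁻ s in Ioo θ t, logWeight L s := by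
        refine add_le_add_right (setLIntegral_mono' measurableSet_Ioo fun s hs ↦ ?_) _
        exact logWeight_le_logWeight hL (hθ.trans hs.1.le) hs.2.le

theorem lintegral_Ioc_ofReal_deriv_eq {g g' : ℝ → ℝ} {a b : ℝ} (hab : a ≤ b)
    (hg : ∀ s ∈ Icc a b, HasDerivAt g (g' s) s) (hg' : ∀ s ∈ Icc a b, 0 ≤ g' s) :
    ∫⁻ s in Ioc a b, ENNReal.ofReal (g' s) = ENNReal.ofReal (g b - g a) := by
  have hg_cont : ContinuousOn g (Icc a b) := fun s hs ↦ (hg s hs).continuousAt.continuousWithinAt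
  have hg_int : IntegrableOn g' (Ioc a b) :=
    intervalIntegral.integrableOn_deriv_of_nonneg hg_cont
      (fun s hs ↦ hg s (Ioo_subset_Icc_self hs)) (fun s hs ↦ hg' s (Ioo_subset_Icc_self hs))
  rw [← ofReal_integral_eq_lintegral_ofReal hg_int
      (ae_restrict_of_forall_mem measurableSet_Ioc fun s hs ↦ hg' s (Ioc_subset_Icc_self hs)),
    ← intervalIntegral.integral_of_le hab,
    intervalIntegral.integral_eq_sub_of_hasDerivAt_of_le hab hg_cont
      (fun s hs ↦ hg s (Ioo_subset_Icc_self hs))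
      ((intervalIntegrable_iff_integrableOn_Ioc_of_le hab).2 hg_int)]

theorem lintegral_logWeight_le {L t : ℝ} (hL : 1 ≤ L) (ht : 0 ≤ t) :
    ∫⁻ s in Ioo 0 t, logWeight L s ≤ ENNReal.ofReal (2 * musielak L t) := by
  have h_denom : ∀ s ∈ Icc 0 t, 2 ≤ elog s + L := fun s hs ↦ by
    linarith [one_le_elog hs.1]
  have h_deriv : ∀ s ∈ Icc 0 t, HasDerivAt (fun s ↦ 2 * musielak L s)
      (2 * ((1 * (elog s + L) - s * (Real.exp 1 + s)⁻¹) / (elog s + L) ^ 2)) s := fun s hs ↦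
    ((hasDerivAt_id s).div ((hasDerivAt_elog hs.1).add_const L)
      (by linarith [h_denom s hs])).const_mul 2
  have h_le : ∀ s ∈ Icc 0 t, (elog s + L)⁻¹ ≤
      2 * ((1 * (elog s + L) - s * (Real.exp 1 + s)⁻¹) / (elog s + L) ^ 2) := fun s hs ↦ by
    have h_frac : s * (Real.exp 1 + s)⁻¹ ≤ 1 :=
      mul_inv_le_one_of_le₀ (le_add_of_nonneg_left (Real.exp_pos 1).le)
        (exp_one_add_pos hs.1).le
    have := h_denom s hs
    rw [← mul_div_assoc, inv_eq_one_div, div_le_div_iff₀ (by linarith) (by positivity)]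
    nlinarith
  calc ∫⁻ s in Ioo 0 t, logWeight L s
      ≤ ∫⁻ s in Ioc 0 t, ENNReal.ofReal
          (2 * ((1 * (elog s + L) - s * (Real.exp 1 + s)⁻¹) / (elog s + L) ^ 2)) :=
        (lintegral_mono_set Ioo_subset_Ioc_self).trans <|
          setLIntegral_mono' measurableSet_Ioc fun s hs ↦
            ENNReal.ofReal_le_ofReal (h_le s (Ioc_subset_Icc_self hs))
    _ = ENNReal.ofReal (2 * musielak L t) := by
        rw [lintegral_Ioc_ofReal_deriv_eq ht h_deriv fun s hs ↦
          (inv_nonneg.2 (by linarith [h_denom s hs])).trans (h_le s hs)]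
        simp [musielak]

theorem lintegral_inv_exp_one_add_mul_logWeight {L a b : ℝ} (hL : 1 ≤ L) (ha : 0 ≤ a) (hb : 0 ≤ b) :
    ∫⁻ s in Ioc a b, ENNReal.ofReal (Real.exp 1 + s)⁻¹ * logWeight L s =
      ENNReal.ofReal (Real.log (elog b + L) - Real.log (elog a + L)) := by
  have h_denom : ∀ s, 0 ≤ s → 0 < elog s + L := fun s hs ↦ by linarith [one_le_elog hs]
  rcases le_total a b with hab | hba
  · rw [← lintegral_Ioc_ofReal_deriv_eq (g' := fun s ↦ (Real.exp 1 + s)⁻¹ / (elog s + L)) hab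
      (fun s hs ↦ ((hasDerivAt_elog (ha.trans hs.1)).add_const L).log
        (h_denom s (ha.trans hs.1)).ne')
      fun s hs ↦ div_nonneg (inv_nonneg.2 (exp_one_add_pos (ha.trans hs.1)).le)
        (h_denom s (ha.trans hs.1)).le]
    refine setLIntegral_congr_fun measurableSet_Ioc fun s hs ↦ ?_
    rw [logWeight, ← ENNReal.ofReal_mul
      (inv_nonneg.2 (exp_one_add_pos (ha.trans hs.1.le)).le), div_eq_mul_inv]
  · rw [Ioc_eq_empty_of_le hba, Measure.restrict_empty, lintegral_zero_measure, eq_comm,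
      ENNReal.ofReal_eq_zero, sub_nonpos]
    exact Real.log_le_log (h_denom b hb) (by gcongr; exact elog_le_elog hb hba)

theorem lintegral_inv_mul_logWeight_le_of_le_one {L a k : ℝ} (hL : 1 ≤ L) (ha : 0 < a)
    (ha₁ : a ≤ 1) (hk : Real.log a⁻¹ ≤ k * L) :
    ∫⁻ s in Ioc a 1, ENNReal.ofReal s⁻¹ * logWeight L s ≤ ENNReal.ofReal k := by
  have hL₀ : 0 < L := one_pos.trans_le hL
  calc ∫⁻ s in Ioc a 1, ENNReal.ofReal s⁻¹ * logWeight L s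
      ≤ ∫⁻ s in Ioc a 1, ENNReal.ofReal s⁻¹ * ENNReal.ofReal L⁻¹ := by
        refine setLIntegral_mono' measurableSet_Ioc fun s hs ↦ ?_
        exact mul_le_mul_right (ENNReal.ofReal_le_ofReal <| inv_anti₀ hL₀ <|
          le_add_of_nonneg_left (elog_pos (ha.trans hs.1).le).le) _
    _ = ENNReal.ofReal (Real.log 1 - Real.log a) * ENNReal.ofReal L⁻¹ := by
        rw [lintegral_mul_const' _ _ ENNReal.ofReal_ne_top, lintegral_Ioc_ofReal_deriv_eq ha₁
          (fun s hs ↦ Real.hasDerivAt_log (ha.trans_le hs.1).ne')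
          fun s hs ↦ inv_nonneg.2 (ha.le.trans hs.1)]
    _ ≤ ENNReal.ofReal k := by
        rw [← ENNReal.ofReal_mul' (inv_nonneg.2 hL₀.le), Real.log_one, zero_sub, ← Real.log_inv]
        exact ENNReal.ofReal_le_ofReal ((mul_inv_le_iff₀ hL₀).2 hk)

theorem lintegral_inv_mul_logWeight_le_of_one_le {L b : ℝ} (hL : 1 ≤ L) (hb : 0 ≤ b) :
    ∫⁻ s in Ioc 1 b, ENNReal.ofReal s⁻¹ * logWeight L s ≤
      ENNReal.ofReal (4 * (Real.log 2 + log⁺ (elog b / L))) := by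
  have hL₀ : 0 < L := one_pos.trans_le hL
  have h_log : Real.log (elog b + L) - Real.log (elog 1 + L) ≤
      Real.log 2 + log⁺ (elog b / L) := by
    have h_elog := elog_pos hb
    calc Real.log (elog b + L) - Real.log (elog 1 + L)
        ≤ Real.log (elog b + L) - Real.log L := by
          gcongr
          exact le_add_of_nonneg_left (elog_pos zero_le_one).le
      _ = Real.log (elog b / L + 1) := by
          rw [← Real.log_div (by positivity) hL₀.ne', add_div, div_self hL₀.ne']
      _ ≤ log⁺ (elog b / L + 1) := le_max_right _ _
      _ ≤ Real.log 2 + log⁺ (elog b / L) := by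
          simpa using Real.posLog_add (x := elog b / L) (y := 1)
  calc ∫⁻ s in Ioc 1 b, ENNReal.ofReal s⁻¹ * logWeight L s
      ≤ ∫⁻ s in Ioc 1 b, 4 * (ENNReal.ofReal (Real.exp 1 + s)⁻¹ * logWeight L s) := by
        refine setLIntegral_mono' measurableSet_Ioc fun s hs ↦ ?_
        rw [← mul_assoc, ← ENNReal.ofReal_ofNat, ← ENNReal.ofReal_mul zero_le_four]
        gcongr
        have h_s : 0 < s := one_pos.trans hs.1
        rw [← div_eq_mul_inv, inv_eq_one_div, div_le_div_iff₀ h_s (exp_one_add_pos h_s.le)]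
        linarith [Real.exp_one_lt_d9, hs.1]
    _ ≤ ENNReal.ofReal (4 * (Real.log 2 + log⁺ (elog b / L))) := by
        rw [lintegral_const_mul' _ _ (by finiteness),
          lintegral_inv_exp_one_add_mul_logWeight hL zero_le_one hb,
          ENNReal.ofReal_mul zero_le_four, ENNReal.ofReal_ofNat]
        gcongr

theorem lintegral_inv_mul_logWeight_le {L a b k : ℝ} (hL : 1 ≤ L) (ha : 0 < a) (ha₁ : a ≤ 1)
    (hk : Real.log a⁻¹ ≤ k * L) (hb : 0 ≤ b) :
    ∫⁻ s in Ioo a b, ENNReal.ofReal s⁻¹ * logWeight L s ≤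
      ENNReal.ofReal k + ENNReal.ofReal (4 * (Real.log 2 + log⁺ (elog b / L))) :=
  calc ∫⁻ s in Ioo a b, ENNReal.ofReal s⁻¹ * logWeight L s
      ≤ ∫⁻ s in Ioc a 1 ∪ Ioc 1 b, ENNReal.ofReal s⁻¹ * logWeight L s :=
        lintegral_mono_set fun s hs ↦
          (le_or_gt s 1).imp (fun h ↦ ⟨hs.1, h⟩) fun h ↦ ⟨h, hs.2.le⟩
    _ ≤ _ := (lintegral_union_le _ _ _).trans <|
        add_le_add (lintegral_inv_mul_logWeight_le_of_le_one hL ha ha₁ hk)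
          (lintegral_inv_mul_logWeight_le_of_one_le hL hb)

theorem posLog_elog_mul_div_le {L c t : ℝ} (hL : 0 ≤ L) (hc : 1 ≤ c) (ht : 0 ≤ t) :
    log⁺ (elog (c * t) / L) ≤ Real.log c + log⁺ (elog t / L) := by
  have h_elog : 0 ≤ elog (c * t) := (elog_pos (by positivity)).le
  calc log⁺ (elog (c * t) / L) ≤ log⁺ (c * (elog t / L)) := by
        refine Real.posLog_le_posLog (by positivity) ?_
        rw [← mul_div_assoc]
        gcongr
        exact elog_mul_le hc ht
    _ ≤ log⁺ c + log⁺ (elog t / L) := Real.posLog_mul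
    _ = Real.log c + log⁺ (elog t / L) := by
        rw [Real.posLog_eq_log (hc.trans (le_abs_self c))]

theorem ofReal_posLog_le_lintegral {L a b : ℝ} (hL : 1 ≤ L) (ha : 0 < a) (hb : 0 ≤ b) :
    ENNReal.ofReal (log⁺ (elog b / L)) ≤ ENNReal.ofReal (Real.log (1 + elog a)) +
      ∫⁻ s in Ioo a b, ENNReal.ofReal s⁻¹ * logWeight L s := by
  have hL₀ : 0 < L := one_pos.trans_le hL
  have h_a := elog_pos ha.le
  have h_b := elog_pos hb
  have h_log : Real.log (elog b / L) ≤
      Real.log (1 + elog a) + (Real.log (elog b + L) - Real.log (elog a + L)) := by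
    rw [← Real.log_div (by positivity) (by positivity),
      ← Real.log_mul (by positivity) (by positivity)]
    refine Real.log_le_log (by positivity) ?_
    rw [← mul_div_assoc, div_le_div_iff₀ hL₀ (by positivity)]
    nlinarith [mul_pos h_a h_b, mul_le_mul_of_nonneg_left hL h_a.le, mul_pos h_a hL₀]
  calc ENNReal.ofReal (log⁺ (elog b / L))
      ≤ ENNReal.ofReal (Real.log (1 + elog a)) +
          ENNReal.ofReal (Real.log (elog b + L) - Real.log (elog a + L)) := by
        rw [Real.posLog_apply, ENNReal.ofReal_max, ENNReal.ofReal_zero, max_eq_right zero_le]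
        exact (ENNReal.ofReal_le_ofReal h_log).trans ENNReal.ofReal_add_le
    _ = ENNReal.ofReal (Real.log (1 + elog a)) +
          ∫⁻ s in Ioo a b, ENNReal.ofReal (Real.exp 1 + s)⁻¹ * logWeight L s := by
        rw [← lintegral_inv_exp_one_add_mul_logWeight hL ha.le hb, setLIntegral_congr Ioo_ae_eq_Ioc]
    _ ≤ _ := by
        refine add_le_add_right (setLIntegral_mono' measurableSet_Ioo fun s hs ↦ ?_) _
        gcongr
        · exact ha.trans hs.1
        · exact le_add_of_nonneg_left (Real.exp_pos 1).le

theorem lintegral_musielak_mul_le {X : Type*} [MeasurableSpace X] (μ : Measure X) {L g : X → ℝ}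
    (hL : ∀ x, 1 ≤ L x) (hg : ∀ x, 0 ≤ g x) {c : ℝ} (hc : 0 ≤ c) :
    ∫⁻ x, ENNReal.ofReal (musielak (L x) (c * g x)) ∂μ ≤
      ENNReal.ofReal (max 1 c) * ∫⁻ x, ENNReal.ofReal (musielak (L x) (g x)) ∂μ := by
  rw [← lintegral_const_mul' _ _ ENNReal.ofReal_ne_top]
  refine lintegral_mono fun x ↦ ?_
  rw [← ENNReal.ofReal_mul (by positivity)]
  exact ENNReal.ofReal_le_ofReal (musielak_mul_le (hL x) hc (hg x))

theorem lintegral_Ioo_logWeight_le {X : Type*} [MeasurableSpace X] (μ : Measure X)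
    {L g : X → ℝ} (hL : ∀ x, 1 ≤ L x) (hg : ∀ x, 0 ≤ g x) {a c : ℝ} (ha : 0 ≤ a) (hc : 0 ≤ c) :
    ∫⁻ x, (∫⁻ s in Ioo a (c * g x), logWeight (L x) s) ∂μ ≤
      2 * (ENNReal.ofReal (max 1 c) * ∫⁻ x, ENNReal.ofReal (musielak (L x) (g x)) ∂μ) :=
  calc ∫⁻ x, (∫⁻ s in Ioo a (c * g x), logWeight (L x) s) ∂μ
      ≤ ∫⁻ x, 2 * ENNReal.ofReal (musielak (L x) (c * g x)) ∂μ := by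
        refine lintegral_mono fun x ↦ (lintegral_mono_set (Ioo_subset_Ioo_left ha)).trans ?_
        rw [← ENNReal.ofReal_ofNat, ← ENNReal.ofReal_mul zero_le_two]
        exact lintegral_logWeight_le (hL x) (mul_nonneg hc (hg x))
    _ = 2 * ∫⁻ x, ENNReal.ofReal (musielak (L x) (c * g x)) ∂μ :=
        lintegral_const_mul' _ _ (by finiteness)
    _ ≤ _ := mul_le_mul_right (lintegral_musielak_mul_le μ hL hg hc) _

theorem lintegral_musielak_mul_lt_top_iff {X : Type*} [MeasurableSpace X] {μ : Measure X}
    {L g : X → ℝ} (hL : ∀ x, 1 ≤ L x) (hg : ∀ x, 0 ≤ g x) {c : ℝ} (hc : 0 < c) :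
    ∫⁻ x, ENNReal.ofReal (musielak (L x) (c * g x)) ∂μ < ⊤ ↔
      ∫⁻ x, ENNReal.ofReal (musielak (L x) (g x)) ∂μ < ⊤ := by
  refine ⟨fun h ↦ ?_, fun h ↦ (lintegral_musielak_mul_le μ hL hg hc.le).trans_lt
    (ENNReal.mul_lt_top ENNReal.ofReal_lt_top h)⟩
  have h_inv := lintegral_musielak_mul_le μ hL (fun x ↦ mul_nonneg hc.le (hg x))
    (inv_nonneg.2 hc.le)
  simp only [inv_mul_cancel_left₀ hc.ne'] at h_inv
  exact h_inv.trans_lt (ENNReal.mul_lt_top ENNReal.ofReal_lt_top h)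

/-! ### Covering by balls -/

theorem setLIntegral_mul_le_setLIntegral_mul {X : Type*} [MeasurableSpace X] {μ : Measure X}
    {A B : Set X} {a b w₁ w₂ : X → ℝ≥0∞} (hA : MeasurableSet A) (hB : MeasurableSet B)
    (ha : AEMeasurable a μ) (hab : ∫⁻ y in A, a y ∂μ ≤ ∫⁻ z in B, b z ∂μ)
    (hw : ∀ y ∈ A, ∀ z ∈ B, w₁ y ≤ w₂ z) :
    ∫⁻ y in A, a y * w₁ y ∂μ ≤ ∫⁻ z in B, b z * w₂ z ∂μ :=
  calc ∫⁻ y in A, a y * w₁ y ∂μ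
      ≤ ∫⁻ y in A, a y * ⨆ x ∈ A, w₁ x ∂μ :=
        setLIntegral_mono' hA fun _ hy ↦ mul_le_mul_right (le_biSup w₁ hy) _
    _ = (∫⁻ y in A, a y ∂μ) * ⨆ y ∈ A, w₁ y := lintegral_mul_const'' _ ha.restrict
    _ ≤ (∫⁻ z in B, b z ∂μ) * ⨆ y ∈ A, w₁ y := mul_le_mul_left hab _
    _ ≤ ∫⁻ z in B, b z * ⨆ y ∈ A, w₁ y ∂μ := lintegral_mul_const_le _ _
    _ ≤ ∫⁻ z in B, b z * w₂ z ∂μ :=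
        setLIntegral_mono' hB fun z hz ↦ mul_le_mul_right (iSup₂_le fun y hy ↦ hw y hy z hz) _

section Covering

variable {X : Type*} [PseudoMetricSpace X] [SecondCountableTopology X] [MeasurableSpace X]
  [OpensMeasurableSpace X] {μ : Measure X}

theorem setLIntegral_mul_le_lintegral_mul_of_closedBall {S : Set X} {R : ℝ}
    {a b w₁ w₂ : X → ℝ≥0∞} (ha : AEMeasurable a μ)
    (hw : ∀ y z, dist y z ≤ 6 * R → w₁ y ≤ w₂ z)
    (hS : ∀ᵐ x ∂μ, x ∈ S → ∃ r, 0 < r ∧ r ≤ R ∧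
      ∫⁻ y in closedBall x (5 * r), a y ∂μ ≤ ∫⁻ z in closedBall x r, b z ∂μ) :
    ∫⁻ y in S, a y * w₁ y ∂μ ≤ ∫⁻ z, b z * w₂ z ∂μ := by
  set G : Set X := {x | ∃ r, 0 < r ∧ r ≤ R ∧
    ∫⁻ y in closedBall x (5 * r), a y ∂μ ≤ ∫⁻ z in closedBall x r, b z ∂μ}
  choose! r hr_pos hrR hr_int using fun x (hx : x ∈ G) ↦ hx
  obtain ⟨u, huG, hu_disj, hu_cover⟩ :=
    Vitali.exists_disjoint_subfamily_covering_enlargement_closedBall G id r R hrR 5 (by norm_num)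
  have hu_count : u.Countable := hu_disj.countable_of_nonempty_interior fun x hx ↦
    (nonempty_ball.2 (hr_pos x (huG hx))).mono ball_subset_interior_closedBall
  have := hu_count.to_subtype
  have hG_cover : G ⊆ ⋃ x : u, closedBall (x : X) (5 * r x) := fun x hx ↦ by
    obtain ⟨z, hzu, hz⟩ := hu_cover x hx
    exact mem_iUnion.2 ⟨⟨z, hzu⟩, hz (mem_closedBall_self (hr_pos x hx).le)⟩
  calc ∫⁻ y in S, a y * w₁ y ∂μ
      ≤ ∫⁻ y in ⋃ x : u, closedBall (x : X) (5 * r x), a y * w₁ y ∂μ :=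
        (lintegral_mono_set' hS).trans (lintegral_mono_set hG_cover)
    _ ≤ ∑' x : u, ∫⁻ y in closedBall (x : X) (5 * r x), a y * w₁ y ∂μ :=
        lintegral_iUnion_le _ _
    _ ≤ ∑' x : u, ∫⁻ z in closedBall (x : X) (r x), b z * w₂ z ∂μ := by
        refine ENNReal.tsum_le_tsum fun x ↦ setLIntegral_mul_le_setLIntegral_mul
          measurableSet_closedBall measurableSet_closedBall ha (hr_int x (huG x.2))
          fun y hy z hz ↦ hw y z ((dist_triangle_right y z x).trans ?_)
        linarith [mem_closedBall.1 hy, mem_closedBall.1 hz, hrR x (huG x.2)]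
    _ = ∫⁻ z in ⋃ x ∈ u, closedBall x (r x), b z * w₂ z ∂μ :=
        (lintegral_biUnion hu_count (fun _ _ ↦ measurableSet_closedBall) hu_disj _).symm
    _ ≤ ∫⁻ z, b z * w₂ z ∂μ := setLIntegral_le_lintegral _ _

end Covering

/-! ### The local maximal function -/

theorem lowerSemicontinuous_setLIntegral_ball {X : Type*} [PseudoMetricSpace X]
    [MeasurableSpace X] (μ : Measure X) (f : X → ℝ≥0∞) (r : ℝ) :
    LowerSemicontinuous fun x ↦ ∫⁻ y in ball x r, f y ∂μ := by
  intro x t ht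
  obtain ⟨u, hu_mono, hu_lt, hu_lim⟩ := exists_seq_strictMono_tendsto r
  have h_union : ball x r ⊆ ⋃ k, ball x (u k) := fun y hy ↦
    mem_iUnion.2 (hu_lim.eventually (lt_mem_nhds hy)).exists
  have h_dir : Directed (· ⊆ ·) fun k ↦ ball x (u k) :=
    Monotone.directed_le fun _ _ h ↦ ball_subset_ball (hu_mono.monotone h)
  obtain ⟨k, hk⟩ : ∃ k, t < ∫⁻ y in ball x (u k), f y ∂μ := by
    rw [← lt_iSup_iff, ← setLIntegral_iUnion_of_directed f h_dir]
    exact ht.trans_le (lintegral_mono_set h_union)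
  filter_upwards [ball_mem_nhds x (sub_pos.2 (hu_lt k))] with z hz
  refine hk.trans_le (lintegral_mono_set (ball_subset_ball' ?_))
  linarith [mem_ball'.1 hz]

/-- The local Hardy–Littlewood maximal function: the supremum of the averages of `f` over the
balls of radius less than `1` centered at `x`. The function `Mloc` is normalized by `r ^ n`
instead of the measure of the ball, hence differs by the measure of the unit ball. -/
def localMaximal {X : Type*} [PseudoMetricSpace X] [MeasurableSpace X] (μ : Measure X)
    (f : X → ℝ≥0∞) (x : X) : ℝ≥0∞ :=
  ⨆ r : Ioo (0 : ℝ) 1, ⨍⁻ y in ball x r, f y ∂μ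

section LocalMaximal

variable {E : Type*} [NormedAddCommGroup E] [NormedSpace ℝ E] [FiniteDimensional ℝ E]
  [MeasurableSpace E] [BorelSpace E] {μ : Measure E} [μ.IsAddHaarMeasure]

theorem lt_localMaximal_iff {f : E → ℝ≥0∞} {s : ℝ≥0∞} {x : E} :
    s < localMaximal μ f x ↔
      ∃ r, 0 < r ∧ r < 1 ∧ s * μ (ball 0 r) < ∫⁻ y in ball x r, f y ∂μ := by
  simp only [localMaximal, lt_iSup_iff, Subtype.exists, mem_Ioo, exists_prop, and_assoc]
  refine exists_congr fun r ↦ and_congr_right fun hr ↦ and_congr_right fun _ ↦ ?_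
  rw [setLAverage_eq, ENNReal.lt_div_iff_mul_lt (.inl (measure_ball_pos μ x hr).ne')
    (.inl measure_ball_lt_top.ne), Measure.addHaar_ball_center]

theorem lowerSemicontinuous_localMaximal (f : E → ℝ≥0∞) :
    LowerSemicontinuous (localMaximal μ f) := by
  intro x s hs
  obtain ⟨r, hr₀, hr₁, hr⟩ := lt_localMaximal_iff.1 hs
  filter_upwards [lowerSemicontinuous_setLIntegral_ball μ f r x _ hr] with z hz
  exact lt_localMaximal_iff.2 ⟨r, hr₀, hr₁, hz⟩

theorem measurable_localMaximal (f : E → ℝ≥0∞) : Measurable (localMaximal μ f) :=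
  (lowerSemicontinuous_localMaximal f).measurable

variable (μ) in
theorem addHaar_closedBall_eq_addHaar_ball_of_pos (x : E) {r : ℝ} (hr : 0 < r) :
    μ (closedBall x r) = μ (ball x r) := by
  rw [Measure.addHaar_closedBall μ x hr.le, Measure.addHaar_ball_of_pos μ x hr]

variable (μ) in
theorem addHaar_closedBall_five_mul (x : E) {r : ℝ} (hr : 0 < r) :
    μ (closedBall x (5 * r)) = 5 ^ finrank ℝ E * μ (ball x r) := by
  rw [Measure.addHaar_closedBall_mul_of_pos μ x (by norm_num),
    addHaar_closedBall_eq_addHaar_ball_of_pos μ 0 hr, ← Measure.addHaar_ball_center μ x,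
    ENNReal.ofReal_pow (by norm_num), ENNReal.ofReal_ofNat]

/-- The part of `f` below `s / 2` contributes at most half of an average exceeding `s`. -/
theorem mul_measure_le_setLIntegral_indicator {X : Type*} [MeasurableSpace X] {μ : Measure X}
    {f : X → ℝ≥0∞} {s : ℝ≥0∞} {B : Set X}
    (hsB : s * μ B ≠ ⊤) (h : s * μ B ≤ ∫⁻ y in B, f y ∂μ) :
    s * μ B ≤ ∫⁻ y in B, 2 * {y | s / 2 < f y}.indicator f y ∂μ := by
  have h_split : s * μ B ≤ s / 2 * μ B + ∫⁻ y in B, {y | s / 2 < f y}.indicator f y ∂μ :=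
    calc s * μ B ≤ ∫⁻ y in B, f y ∂μ := h
      _ ≤ ∫⁻ y in B, (s / 2 + {y | s / 2 < f y}.indicator f y) ∂μ := by
          refine lintegral_mono fun y ↦ ?_
          by_cases hy : s / 2 < f y
          · exact le_add_left (indicator_of_mem (s := {y | s / 2 < f y}) hy f).ge
          · exact le_add_right (not_lt.1 hy)
      _ = _ := by rw [lintegral_add_left measurable_const, setLIntegral_const]
  have h_half : s / 2 * μ B + s / 2 * μ B = s * μ B := by rw [← add_mul, ENNReal.add_halves]
  have h_half_top : s / 2 * μ B ≠ ⊤ := by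
    rw [← h_half] at hsB
    exact (ENNReal.add_ne_top.1 hsB).1
  rw [lintegral_const_mul' _ _ (by finiteness), ← h_half, ← two_mul]
  rw [← h_half] at h_split
  exact mul_le_mul_right ((ENNReal.add_le_add_iff_left h_half_top).1 h_split) _

theorem mul_setLIntegral_localMaximal_le {f : E → ℝ≥0∞} (hf : AEMeasurable f μ) (s : ℝ≥0∞)
    {w₁ w₂ : E → ℝ≥0∞} (hw : ∀ y z, dist y z ≤ 6 → w₁ y ≤ w₂ z) :
    s * ∫⁻ x in {x | s < localMaximal μ f x}, w₁ x ∂μ ≤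
      2 * 5 ^ finrank ℝ E * ∫⁻ x in {x | s / 2 < f x}, f x * w₂ x ∂μ := by
  set S : Set E := {x | s / 2 < f x}
  have hS : NullMeasurableSet S μ := nullMeasurableSet_lt aemeasurable_const hf
  calc s * ∫⁻ x in {x | s < localMaximal μ f x}, w₁ x ∂μ
      ≤ ∫⁻ x in {x | s < localMaximal μ f x}, s * w₁ x ∂μ := lintegral_const_mul_le _ _
    _ ≤ ∫⁻ x, (2 * 5 ^ finrank ℝ E * S.indicator f x) * w₂ x ∂μ := by
        refine setLIntegral_mul_le_lintegral_mul_of_closedBall (R := 1) aemeasurable_const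
          (by simpa using hw) (.of_forall fun x hx ↦ ?_)
        obtain ⟨r, hr₀, hr₁, hr⟩ := lt_localMaximal_iff.1 hx
        refine ⟨r, hr₀, hr₁.le, ?_⟩
        rw [← Measure.addHaar_ball_center μ x] at hr
        calc ∫⁻ _ in closedBall x (5 * r), s ∂μ
            = 5 ^ finrank ℝ E * (s * μ (ball x r)) := by
              rw [setLIntegral_const, addHaar_closedBall_five_mul μ x hr₀, mul_left_comm]
          _ ≤ 5 ^ finrank ℝ E * ∫⁻ y in ball x r, 2 * S.indicator f y ∂μ := by
              gcongr
              exact mul_measure_le_setLIntegral_indicator hr.ne_top hr.le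
          _ ≤ ∫⁻ y in closedBall x r, 2 * 5 ^ finrank ℝ E * S.indicator f y ∂μ := by
              rw [← lintegral_const_mul' _ _ (by finiteness)]
              simp only [← mul_assoc, mul_comm _ (2 : ℝ≥0∞)]
              exact lintegral_mono_set ball_subset_closedBall
    _ = 2 * 5 ^ finrank ℝ E * ∫⁻ x in S, f x * w₂ x ∂μ := by
        simp only [mul_assoc, ← indicator_mul_left]
        rw [lintegral_const_mul' _ _ (by finiteness), lintegral_const_mul' _ _ (by finiteness),
          lintegral_indicator₀ hS]

theorem ae_localMaximal_lt_top {f : E → ℝ≥0∞} (hf : AEMeasurable f μ)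
    (hf_int : ∫⁻ x, f x ∂μ ≠ ⊤) : ∀ᵐ x ∂μ, localMaximal μ f x < ⊤ := by
  have h_weak : ∀ k : ℕ, k * μ {x | localMaximal μ f x = ⊤} ≤
      2 * 5 ^ finrank ℝ E * ∫⁻ x, f x ∂μ := fun k ↦
    calc k * μ {x | localMaximal μ f x = ⊤}
        ≤ k * ∫⁻ _ in {x | k < localMaximal μ f x}, 1 ∂μ := by
          rw [setLIntegral_one]
          exact mul_le_mul_right
            (measure_mono fun _ hx ↦ (ENNReal.natCast_lt_top k).trans_eq hx.symm) _
      _ ≤ 2 * 5 ^ finrank ℝ E * ∫⁻ x in {x | k / 2 < f x}, f x * 1 ∂μ :=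
          mul_setLIntegral_localMaximal_le hf k fun _ _ _ ↦ le_rfl
      _ ≤ 2 * 5 ^ finrank ℝ E * ∫⁻ x, f x ∂μ := by
          simp only [mul_one]
          exact mul_le_mul_right (setLIntegral_le_lintegral _ _) _
  have h_top_mul : ⊤ * μ {x | localMaximal μ f x = ⊤} ≠ ⊤ := by
    refine ne_top_of_le_ne_top (b := 2 * 5 ^ finrank ℝ E * ∫⁻ x, f x ∂μ) (by finiteness) ?_
    rw [← ENNReal.iSup_natCast, ENNReal.iSup_mul]
    simpa only [ENNReal.iSup_natCast] using iSup_le h_weak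
  simp only [lt_top_iff_ne_top, ae_iff, not_not]
  by_contra h_ne
  exact h_top_mul (ENNReal.top_mul h_ne)

theorem ae_exists_stopping_radius {f : E → ℝ≥0∞} (hf : AEMeasurable f μ)
    (hf_int : ∫⁻ x, f x ∂μ ≠ ⊤) {s : ℝ≥0∞} (hs : ∫⁻ x, f x ∂μ ≤ s * μ (closedBall 0 1)) :
    ∀ᵐ x ∂μ, s < f x → ∃ r, 0 < r ∧ r ≤ 1 / 5 ∧
      s * μ (closedBall x r) < ∫⁻ y in closedBall x r, f y ∂μ ∧
      ∫⁻ y in closedBall x (5 * r), f y ∂μ ≤ s * μ (closedBall x (5 * r)) := by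
  filter_upwards [(Besicovitch.vitaliFamily μ).ae_tendsto_lintegral_div hf hf_int] with x hx hsx
  set P : ℕ → Prop := fun k ↦
    s * μ (closedBall x ((1 / 5) ^ k)) < ∫⁻ y in closedBall x ((1 / 5) ^ k), f y ∂μ
  have hP₀ : ¬ P 0 := by
    simp only [P, pow_zero, not_lt, Measure.addHaar_closedBall_center μ x]
    exact (setLIntegral_le_lintegral _ _).trans hs
  have hP : ∃ k, P k := by
    have h_lim := hx.comp ((Besicovitch.tendsto_filterAt μ x).comp
      (tendsto_pow_atTop_nhdsWithin_zero_of_lt_one (r := (1 / 5 : ℝ)) (by norm_num)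
        (by norm_num)))
    refine (h_lim.eventually (lt_mem_nhds hsx)).exists.imp fun k hk ↦ ?_
    exact (ENNReal.lt_div_iff_mul_lt
      (.inl (measure_closedBall_pos μ x (by positivity)).ne')
      (.inl measure_closedBall_lt_top.ne)).1 hk
  obtain ⟨k, hk, hk_succ⟩ := Nat.exists_not_and_succ_of_not_zero_of_exists hP₀ hP
  have h_five : 5 * (1 / 5 : ℝ) ^ (k + 1) = (1 / 5) ^ k := by ring
  refine ⟨(1 / 5) ^ (k + 1), by positivity,
    pow_le_of_le_one (by norm_num) (by norm_num) k.succ_ne_zero, hk_succ, ?_⟩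
  rw [h_five]
  exact not_lt.1 hk

theorem setLIntegral_mul_le_localMaximal {f : E → ℝ≥0∞} (hf : AEMeasurable f μ)
    (hf_int : ∫⁻ x, f x ∂μ ≠ ⊤) {s : ℝ≥0∞} (hs : ∫⁻ x, f x ∂μ ≤ s * μ (closedBall 0 1))
    {w₁ w₂ : E → ℝ≥0∞} (hw : ∀ y z, dist y z ≤ 6 → w₁ y ≤ w₂ z) :
    ∫⁻ x in {x | s < f x}, f x * w₁ x ∂μ ≤
      5 ^ finrank ℝ E * s * ∫⁻ x in {x | s / 3 ^ finrank ℝ E < localMaximal μ f x}, w₂ x ∂μ := by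
  rcases eq_or_ne s ⊤ with rfl | hs_top
  · simp
  set S : Set E := {x | s / 3 ^ finrank ℝ E < localMaximal μ f x}
  have hS : MeasurableSet S := measurableSet_lt measurable_const (measurable_localMaximal f)
  calc ∫⁻ x in {x | s < f x}, f x * w₁ x ∂μ
      ≤ ∫⁻ x, S.indicator (fun _ ↦ 5 ^ finrank ℝ E * s) x * w₂ x ∂μ := by
        refine setLIntegral_mul_le_lintegral_mul_of_closedBall (R := 1 / 5) hf
          (fun y z h ↦ hw y z (by linarith)) ?_
        filter_upwards [ae_exists_stopping_radius hf hf_int hs] with x hx hsx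
        obtain ⟨r, hr₀, hr₁, hr_lt, hr_le⟩ := hx hsx
        have h_mem : closedBall x r ⊆ S := fun z hz ↦ by
          refine lt_localMaximal_iff.2 ⟨3 * r, by positivity, by linarith, ?_⟩
          calc s / 3 ^ finrank ℝ E * μ (ball 0 (3 * r)) = s * μ (closedBall x r) := by
                rw [Measure.addHaar_ball_mul_of_pos μ 0 (by norm_num),
                  ← Measure.addHaar_ball_center μ x, ENNReal.ofReal_pow (by norm_num),
                  ENNReal.ofReal_ofNat, ← mul_assoc,
                  ENNReal.div_mul_cancel (by simp) (by finiteness),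
                  addHaar_closedBall_eq_addHaar_ball_of_pos μ x hr₀]
            _ < ∫⁻ y in closedBall x r, f y ∂μ := hr_lt
            _ ≤ ∫⁻ y in ball z (3 * r), f y ∂μ := by
                refine lintegral_mono_set (closedBall_subset_ball' ?_)
                linarith [mem_closedBall'.1 hz]
        refine ⟨r, hr₀, hr₁, hr_le.trans_eq ?_⟩
        rw [setLIntegral_congr_fun measurableSet_closedBall
          fun z hz ↦ indicator_of_mem (h_mem hz) _, setLIntegral_const,
          addHaar_closedBall_five_mul μ x hr₀, addHaar_closedBall_eq_addHaar_ball_of_pos μ x hr₀,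
          mul_left_comm, mul_assoc]
    _ = 5 ^ finrank ℝ E * s * ∫⁻ x in S, w₂ x ∂μ := by
        simp only [← indicator_mul_left]
        rw [lintegral_indicator hS, lintegral_const_mul' _ _ (by finiteness)]

end LocalMaximal

/-! ### Layer cake -/

theorem lintegral_lintegral_Ioo_swap {X : Type*} [MeasurableSpace X] {μ : Measure X} [SFinite μ]
    {a b : X → ℝ} {W : X → ℝ → ℝ≥0∞} (ha : AEMeasurable a μ) (hb : AEMeasurable b μ)
    (hW : AEMeasurable (Function.uncurry W) (μ.prod volume)) :
    ∫⁻ x, (∫⁻ s in Ioo (a x) (b x), W x s) ∂μ =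
      ∫⁻ s, ∫⁻ x in {x | a x < s ∧ s < b x}, W x s ∂μ := by
  have h_set : NullMeasurableSet {p : X × ℝ | a p.1 < p.2 ∧ p.2 < b p.1} (μ.prod volume) :=
    (nullMeasurableSet_lt ha.comp_fst measurable_snd.aemeasurable).inter
      (nullMeasurableSet_lt measurable_snd.aemeasurable hb.comp_fst)
  calc ∫⁻ x, (∫⁻ s in Ioo (a x) (b x), W x s) ∂μ
      = ∫⁻ x, (∫⁻ s, {p : X × ℝ | a p.1 < p.2 ∧ p.2 < b p.1}.indicator
          (Function.uncurry W) (x, s)) ∂μ :=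
        lintegral_congr fun x ↦ (lintegral_indicator measurableSet_Ioo _).symm
    _ = ∫⁻ s, ∫⁻ x, {p : X × ℝ | a p.1 < p.2 ∧ p.2 < b p.1}.indicator
          (Function.uncurry W) (x, s) ∂μ :=
        lintegral_lintegral_swap
          (f := fun x s ↦ indicator _ (Function.uncurry W) (x, s)) (hW.indicator₀ h_set)
    _ = ∫⁻ s, ∫⁻ x in {x | a x < s ∧ s < b x}, W x s ∂μ :=
        lintegral_congr fun s ↦ lintegral_indicator₀
          ((nullMeasurableSet_lt ha aemeasurable_const).inter
            (nullMeasurableSet_lt aemeasurable_const hb)) _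

theorem indicator_le_mul_indicator {X : Type*} {S T : Set X} {c : ℝ≥0∞} {w : X → ℝ≥0∞} {y z : X}
    (hST : y ∈ S → z ∈ T) (hw : w y ≤ c * w z) : S.indicator w y ≤ c * T.indicator w z := by
  by_cases hy : y ∈ S
  · rwa [indicator_of_mem hy, indicator_of_mem (hST hy)]
  · simp [hy]

section LayerCake

variable {E : Type*} [NormedAddCommGroup E] [NormedSpace ℝ E] [FiniteDimensional ℝ E]
  [MeasurableSpace E] [BorelSpace E] {μ : Measure E} [μ.IsAddHaarMeasure]

theorem setLIntegral_level_localMaximal_le {f : E → ℝ≥0} (hf : AEMeasurable f μ) {D : ℝ≥0}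
    {θ θ' : E → ℝ} (hθ : Measurable θ) (hθ' : Measurable θ') {w : E → ℝ≥0∞}
    (hθθ' : ∀ y z, dist y z ≤ 6 → θ' z ≤ θ y) (hw : ∀ y z, dist y z ≤ 6 → w y ≤ D * w z)
    {s : ℝ} (hs : 0 < s) :
    ∫⁻ x in {x | θ x < s ∧ s < (localMaximal μ (fun y ↦ f y) x).toReal}, w x ∂μ ≤
      2 * 5 ^ finrank ℝ E * D *
        ∫⁻ x in {x | θ' x < s ∧ s < 2 * f x}, f x * (ENNReal.ofReal s⁻¹ * w x) ∂μ := by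
  have hs_pos : ENNReal.ofReal s ≠ 0 := by simpa using hs
  have h_weights : ∀ y z, dist y z ≤ 6 →
      {x | θ x < s}.indicator w y ≤ D * {x | θ' x < s}.indicator w z := fun y z hyz ↦
    indicator_le_mul_indicator (fun hy ↦ (hθθ' y z hyz).trans_lt hy) (hw y z hyz)
  have h_iff (t : ℝ≥0) : ENNReal.ofReal s / 2 < t ↔ s < 2 * t := by
    rw [ENNReal.div_lt_iff (by simp) (by simp)]
    exact_mod_cast (ENNReal.ofReal_lt_coe_iff hs.le).trans (by rw [NNReal.coe_mul, mul_comm]; rfl)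
  have h_level : {x | θ' x < s} ∩ {x | ENNReal.ofReal s / 2 < f x} =
      {x | θ' x < s ∧ s < 2 * f x} := by
    simp only [← ofPred_and, h_iff]
  have h_weak := mul_setLIntegral_localMaximal_le hf.coe_nnreal_ennreal (ENNReal.ofReal s)
    h_weights
  calc ∫⁻ x in {x | θ x < s ∧ s < (localMaximal μ (fun y ↦ f y) x).toReal}, w x ∂μ
      ≤ ∫⁻ x in {x | θ x < s} ∩ {x | ENNReal.ofReal s < localMaximal μ (fun y ↦ f y) x},
          w x ∂μ :=
        lintegral_mono_set fun x hx ↦ ⟨hx.1, lt_of_not_ge fun h ↦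
          hx.2.not_ge (ENNReal.toReal_le_of_le_ofReal hs.le h)⟩
    _ = (ENNReal.ofReal s)⁻¹ * (ENNReal.ofReal s *
          ∫⁻ x in {x | ENNReal.ofReal s < localMaximal μ (fun y ↦ f y) x},
            {x | θ x < s}.indicator w x ∂μ) := by
        rw [setLIntegral_indicator (measurableSet_lt hθ measurable_const), ← mul_assoc,
          ENNReal.inv_mul_cancel hs_pos ENNReal.ofReal_ne_top, one_mul]
    _ ≤ (ENNReal.ofReal s)⁻¹ * (2 * 5 ^ finrank ℝ E *
          ∫⁻ x in {x | ENNReal.ofReal s / 2 < f x},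
            f x * (D * {x | θ' x < s}.indicator w x) ∂μ) := by gcongr
    _ = _ := by
        simp only [mul_left_comm _ (D : ℝ≥0∞), ← indicator_mul_right _ (fun x ↦ (f x : ℝ≥0∞))]
        rw [lintegral_const_mul' _ _ ENNReal.coe_ne_top, setLIntegral_indicator
          (measurableSet_lt hθ' measurable_const), h_level, ← ENNReal.ofReal_inv_of_pos hs]
        simp only [mul_left_comm _ (ENNReal.ofReal s⁻¹)]
        rw [lintegral_const_mul' _ _ ENNReal.ofReal_ne_top]
        ring

theorem lintegral_Ioo_localMaximal_le {f : E → ℝ≥0} (hf : AEMeasurable f μ) {D : ℝ≥0}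
    {θ θ' : E → ℝ} (hθ : Measurable θ) (hθ_nonneg : ∀ x, 0 ≤ θ x)
    (hθ' : Measurable θ') (hθθ' : ∀ y z, dist y z ≤ 6 → θ' z ≤ θ y) {W : E → ℝ → ℝ≥0∞}
    (hW : Measurable (Function.uncurry W))
    (hWD : ∀ s, 0 < s → ∀ y z, dist y z ≤ 6 → W y s ≤ D * W z s) :
    ∫⁻ x, (∫⁻ s in Ioo (θ x) (localMaximal μ (fun y ↦ f y) x).toReal, W x s) ∂μ ≤
      2 * 5 ^ finrank ℝ E * D *
        ∫⁻ x, f x * (∫⁻ s in Ioo (θ' x) (2 * f x), ENNReal.ofReal s⁻¹ * W x s) ∂μ :=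
  calc ∫⁻ x, (∫⁻ s in Ioo (θ x) (localMaximal μ (fun y ↦ f y) x).toReal, W x s) ∂μ
      = ∫⁻ s, ∫⁻ x in {x | θ x < s ∧ s < (localMaximal μ (fun y ↦ f y) x).toReal}, W x s ∂μ :=
        lintegral_lintegral_Ioo_swap hθ.aemeasurable
          (measurable_localMaximal _).ennreal_toReal.aemeasurable hW.aemeasurable
    _ ≤ ∫⁻ s, 2 * 5 ^ finrank ℝ E * D *
          ∫⁻ x in {x | θ' x < s ∧ s < 2 * f x}, f x * (ENNReal.ofReal s⁻¹ * W x s) ∂μ := by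
        refine lintegral_mono fun s ↦ ?_
        rcases le_or_gt s 0 with hs | hs
        · have h_empty : {x | θ x < s ∧ s < (localMaximal μ (fun y ↦ f y) x).toReal} = ∅ :=
            eq_empty_of_forall_notMem fun x hx ↦ hx.1.not_ge (hs.trans (hθ_nonneg x))
          simp [h_empty]
        · exact setLIntegral_level_localMaximal_le hf hθ hθ' hθθ' (hWD s hs) hs
    _ = 2 * 5 ^ finrank ℝ E * D * ∫⁻ x, (∫⁻ s in Ioo (θ' x) (2 * f x),
          f x * (ENNReal.ofReal s⁻¹ * W x s)) ∂μ := by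
        rw [lintegral_const_mul' _ _ (by finiteness), lintegral_lintegral_Ioo_swap
          (W := fun x s ↦ f x * (ENNReal.ofReal s⁻¹ * W x s))
          hθ'.aemeasurable (hf.coe_nnreal_real.const_mul 2)
          (hf.coe_nnreal_ennreal.comp_fst.mul
            ((measurable_snd.inv.ennreal_ofReal.mul hW).aemeasurable))]
    _ = _ := by simp only [lintegral_const_mul' _ _ ENNReal.coe_ne_top]

theorem setLIntegral_mul_level_le_localMaximal {f : E → ℝ≥0} (hf : AEMeasurable f μ)
    (hf_int : ∫⁻ x, f x ∂μ ≠ ⊤) {s : ℝ} (hs : 0 < s)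
    (hfs : ∫⁻ x, f x ∂μ ≤ ENNReal.ofReal s * μ (closedBall 0 1)) {D : ℝ≥0} {w : E → ℝ≥0∞}
    (hw : ∀ y z, dist y z ≤ 6 → w y ≤ D * w z) :
    ∫⁻ x in {x | s < f x}, f x * (ENNReal.ofReal s⁻¹ * w x) ∂μ ≤
      5 ^ finrank ℝ E * D * ∫⁻ x in
        {x | s < 3 ^ finrank ℝ E * (localMaximal μ (fun y ↦ f y) x).toReal}, w x ∂μ := by
  have h_level : {x | s < f x} = {x | ENNReal.ofReal s < f x} := by
    simp only [ENNReal.ofReal_lt_coe_iff hs.le]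
  have h_maximal : {x | ENNReal.ofReal s / 3 ^ finrank ℝ E < localMaximal μ (fun y ↦ f y) x} ≤ᵐ[μ]
      {x | s < 3 ^ finrank ℝ E * (localMaximal μ (fun y ↦ f y) x).toReal} := by
    filter_upwards [ae_localMaximal_lt_top hf.coe_nnreal_ennreal hf_int] with x hx_top hx
    have h_lt := (ENNReal.div_lt_iff (by simp) (by simp)).1 hx
    change s < 3 ^ finrank ℝ E * (localMaximal μ (fun y ↦ f y) x).toReal
    simpa [mul_comm] using (ENNReal.ofReal_lt_iff_lt_toReal hs.le (by finiteness)).1 h_lt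
  calc ∫⁻ x in {x | s < f x}, f x * (ENNReal.ofReal s⁻¹ * w x) ∂μ
      = ENNReal.ofReal s⁻¹ * ∫⁻ x in {x | ENNReal.ofReal s < f x}, f x * w x ∂μ := by
        rw [h_level, ← lintegral_const_mul' _ _ ENNReal.ofReal_ne_top]
        simp only [mul_left_comm]
    _ ≤ ENNReal.ofReal s⁻¹ * (5 ^ finrank ℝ E * ENNReal.ofReal s * ∫⁻ x in
          {x | ENNReal.ofReal s / 3 ^ finrank ℝ E < localMaximal μ (fun y ↦ f y) x},
          D * w x ∂μ) := by
        gcongr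
        exact setLIntegral_mul_le_localMaximal hf.coe_nnreal_ennreal hf_int hfs hw
    _ = 5 ^ finrank ℝ E * D * ∫⁻ x in
          {x | ENNReal.ofReal s / 3 ^ finrank ℝ E < localMaximal μ (fun y ↦ f y) x}, w x ∂μ := by
        have h_cancel : ENNReal.ofReal s⁻¹ * ENNReal.ofReal s = 1 := by
          rw [← ENNReal.ofReal_mul (inv_nonneg.2 hs.le), inv_mul_cancel₀ hs.ne', ENNReal.ofReal_one]
        rw [lintegral_const_mul' _ _ ENNReal.coe_ne_top, mul_assoc, mul_left_comm, mul_assoc,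
          ← mul_assoc (ENNReal.ofReal s⁻¹), h_cancel, one_mul]
    _ ≤ _ := mul_le_mul_right (lintegral_mono_set' h_maximal) _

theorem lintegral_mul_Ioo_le_localMaximal {f : E → ℝ≥0} (hf : AEMeasurable f μ)
    (hf_int : ∫⁻ x, f x ∂μ ≠ ⊤) {A : ℝ} (hA : 0 ≤ A)
    (hfA : ∫⁻ x, f x ∂μ ≤ ENNReal.ofReal A * μ (closedBall 0 1)) {D : ℝ≥0}
    {W : E → ℝ → ℝ≥0∞} (hW : Measurable (Function.uncurry W))
    (hWD : ∀ s, 0 < s → ∀ y z, dist y z ≤ 6 → W y s ≤ D * W z s) :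
    ∫⁻ x, f x * (∫⁻ s in Ioo A (f x), ENNReal.ofReal s⁻¹ * W x s) ∂μ ≤
      5 ^ finrank ℝ E * D * ∫⁻ x, (∫⁻ s in
        Ioo A (3 ^ finrank ℝ E * (localMaximal μ (fun y ↦ f y) x).toReal), W x s) ∂μ :=
  calc ∫⁻ x, f x * (∫⁻ s in Ioo A (f x), ENNReal.ofReal s⁻¹ * W x s) ∂μ
      = ∫⁻ s, ∫⁻ x in {x | A < s ∧ s < f x}, f x * (ENNReal.ofReal s⁻¹ * W x s) ∂μ := by
        simp only [← lintegral_const_mul' _ _ ENNReal.coe_ne_top]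
        exact lintegral_lintegral_Ioo_swap aemeasurable_const hf.coe_nnreal_real
          (hf.coe_nnreal_ennreal.comp_fst.mul
            ((measurable_snd.inv.ennreal_ofReal.mul hW).aemeasurable))
    _ ≤ ∫⁻ s, 5 ^ finrank ℝ E * D * ∫⁻ x in
          {x | A < s ∧ s < 3 ^ finrank ℝ E * (localMaximal μ (fun y ↦ f y) x).toReal},
          W x s ∂μ := by
        refine lintegral_mono fun s ↦ ?_
        rcases le_or_gt s A with hs | hs
        · simp [hs.not_gt]
        simp only [hs, true_and]
        exact setLIntegral_mul_level_le_localMaximal hf hf_int (hA.trans_lt hs)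
          (hfA.trans (by gcongr)) (hWD s (hA.trans_lt hs))
    _ = _ := by
        rw [lintegral_const_mul' _ _ (by finiteness), lintegral_lintegral_Ioo_swap
          aemeasurable_const
          ((measurable_localMaximal _).ennreal_toReal.const_mul _).aemeasurable hW.aemeasurable]

end LayerCake

/-! ### The weight in `L_log` -/

section Llog

variable {E : Type*} [NormedAddCommGroup E]

theorem elog_norm_le_add_dist (y z : E) : elog ‖y‖ ≤ elog ‖z‖ + dist y z :=
  (elog_le_elog (norm_nonneg y) (norm_le_norm_add_norm_sub' y z)).trans <| by
    rw [← dist_eq_norm]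
    exact elog_add_le (norm_nonneg z) dist_nonneg

theorem logWeight_elog_norm_le {y z : E} (hyz : dist y z ≤ 6) {s : ℝ} (hs : 0 ≤ s) :
    logWeight (elog ‖y‖) s ≤ 4 * logWeight (elog ‖z‖) s := by
  have h_s := one_le_elog hs
  have h_y := one_le_elog (norm_nonneg y)
  have h_z := one_le_elog (norm_nonneg z)
  have h_dist := elog_norm_le_add_dist z y
  rw [dist_comm] at h_dist
  rw [logWeight, logWeight, ← ENNReal.ofReal_ofNat, ← ENNReal.ofReal_mul zero_le_four,
    ← div_eq_mul_inv, inv_eq_one_div]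
  refine ENNReal.ofReal_le_ofReal ((div_le_div_iff₀ (by linarith) (by linarith)).2 ?_)
  linarith

theorem measurable_uncurry_logWeight_elog_norm [MeasurableSpace E] [BorelSpace E] :
    Measurable (Function.uncurry fun (x : E) s ↦ logWeight (elog ‖x‖) s) :=
  measurable_logWeight.comp ((measurable_elog.comp measurable_norm).prodMap measurable_id)

theorem seven_mul_one_add_norm_rpow_neg_le {y z : E} (hyz : dist y z ≤ 6) {p : ℝ} (hp : 0 ≤ p) :
    (7 * (1 + ‖z‖)) ^ (-p) ≤ (1 + ‖y‖) ^ (-p) := by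
  refine Real.rpow_le_rpow_of_nonpos (by positivity) ?_ (neg_nonpos.2 hp)
  rw [dist_eq_norm] at hyz
  linarith [norm_le_norm_add_norm_sub' y z, norm_nonneg z]

theorem lintegral_inv_mul_logWeight_elog_norm_le {p : ℝ} (hp : 0 ≤ p) (x : E) {t : ℝ}
    (ht : 0 ≤ t) :
    ∫⁻ s in Ioo ((7 * (1 + ‖x‖)) ^ (-p)) (2 * t), ENNReal.ofReal s⁻¹ * logWeight (elog ‖x‖) s ≤
      ENNReal.ofReal ((7 * p + 8) * (1 + log⁺ (elog t / elog ‖x‖))) := by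
  have h_elog := one_le_elog (norm_nonneg x)
  have h_base : 1 ≤ 7 * (1 + ‖x‖) := by linarith [norm_nonneg x]
  have h_log : Real.log ((7 * (1 + ‖x‖)) ^ (-p))⁻¹ ≤ 7 * p * elog ‖x‖ := by
    have h_seven : Real.log 7 ≤ 6 := by linarith [Real.log_le_sub_one_of_pos (x := 7) (by simp)]
    have h_norm : Real.log (1 + ‖x‖) ≤ elog ‖x‖ :=
      Real.log_le_log (by positivity) (by gcongr; exact Real.one_le_exp zero_le_one)
    rw [← Real.rpow_neg (by positivity), neg_neg, Real.log_rpow (by positivity),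
      Real.log_mul (by norm_num) (by positivity)]
    nlinarith
  have h_posLog := posLog_elog_mul_div_le (one_pos.le.trans h_elog) one_le_two ht
  have h_nonneg : 0 ≤ log⁺ (elog t / elog ‖x‖) := Real.posLog_nonneg
  have h_two : Real.log 2 ≤ 1 := by linarith [Real.log_le_sub_one_of_pos two_pos]
  refine (lintegral_inv_mul_logWeight_le h_elog (by positivity)
    (Real.rpow_le_one_of_one_le_of_nonpos h_base (neg_nonpos.2 hp)) h_log (by positivity)).trans ?_
  rw [← ENNReal.ofReal_add (by positivity)
    (mul_nonneg zero_le_four (add_nonneg (Real.log_nonneg one_le_two) Real.posLog_nonneg))]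
  refine ENNReal.ofReal_le_ofReal ?_
  nlinarith [mul_nonneg hp h_nonneg]

variable [NormedSpace ℝ E] [FiniteDimensional ℝ E] [MeasurableSpace E] [BorelSpace E]
  {μ : Measure E} [μ.IsAddHaarMeasure]

theorem lintegral_musielak_localMaximal_lt_top {f : E → ℝ≥0} (hf : AEMeasurable f μ)
    (h : ∫⁻ x, ENNReal.ofReal (f x * (1 + log⁺ (elog (f x) / elog ‖x‖))) ∂μ < ⊤) :
    ∫⁻ x, ENNReal.ofReal (musielak (elog ‖x‖) (localMaximal μ (fun y ↦ f y) x).toReal) ∂μ < ⊤ := by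
  set p : ℝ := finrank ℝ E + 1
  have hp : 0 ≤ p := by positivity
  have h_tail : ∫⁻ x : E, ENNReal.ofReal ((1 + ‖x‖) ^ (-p)) ∂μ < ⊤ :=
    (integrable_one_add_norm (lt_add_one _)).lintegral_lt_top
  have h_weak := lintegral_Ioo_localMaximal_le (D := 4) hf (θ := fun x ↦ (1 + ‖x‖) ^ (-p))
    (θ' := fun x ↦ (7 * (1 + ‖x‖)) ^ (-p)) (by fun_prop) (fun _ ↦ by positivity) (by fun_prop)
    (fun _ _ h ↦ seven_mul_one_add_norm_rpow_neg_le h hp)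
    measurable_uncurry_logWeight_elog_norm (fun _ hs _ _ h ↦ logWeight_elog_norm_le h hs.le)
  calc ∫⁻ x, ENNReal.ofReal (musielak (elog ‖x‖) (localMaximal μ (fun y ↦ f y) x).toReal) ∂μ
      ≤ ∫⁻ x, (ENNReal.ofReal ((1 + ‖x‖) ^ (-p)) +
          ∫⁻ s in Ioo ((1 + ‖x‖) ^ (-p)) (localMaximal μ (fun y ↦ f y) x).toReal,
            logWeight (elog ‖x‖) s) ∂μ :=
        lintegral_mono fun x ↦ ofReal_musielak_le (one_le_elog (norm_nonneg x)) (by positivity)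
          toReal_nonneg
    _ = ∫⁻ x, ENNReal.ofReal ((1 + ‖x‖) ^ (-p)) ∂μ +
          ∫⁻ x, (∫⁻ s in Ioo ((1 + ‖x‖) ^ (-p)) (localMaximal μ (fun y ↦ f y) x).toReal,
            logWeight (elog ‖x‖) s) ∂μ := lintegral_add_left (by fun_prop) _
    _ ≤ ∫⁻ x, ENNReal.ofReal ((1 + ‖x‖) ^ (-p)) ∂μ + 2 * 5 ^ finrank ℝ E * (4 : ℝ≥0) *
          ∫⁻ x, ENNReal.ofReal (7 * p + 8) *
            ENNReal.ofReal (f x * (1 + log⁺ (elog (f x) / elog ‖x‖))) ∂μ := by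
        refine add_le_add_right (h_weak.trans ?_) _
        refine mul_le_mul_right (lintegral_mono fun x ↦ ?_) _
        rw [ENNReal.ofReal_mul (f x).coe_nonneg, ENNReal.ofReal_coe_nnreal, mul_left_comm,
          ← ENNReal.ofReal_mul (by positivity)]
        exact mul_le_mul_right
          (lintegral_inv_mul_logWeight_elog_norm_le hp x (f x).coe_nonneg) _
    _ < ⊤ := by
        rw [lintegral_const_mul' _ _ ENNReal.ofReal_ne_top]
        finiteness

theorem lintegral_mul_posLog_lt_top {f : E → ℝ≥0} (hf : AEMeasurable f μ)
    (hf_int : ∫⁻ x, f x ∂μ ≠ ⊤)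
    (h : ∫⁻ x, ENNReal.ofReal
      (musielak (elog ‖x‖) (localMaximal μ (fun y ↦ f y) x).toReal) ∂μ < ⊤) :
    ∫⁻ x, ENNReal.ofReal (f x * (1 + log⁺ (elog (f x) / elog ‖x‖))) ∂μ < ⊤ := by
  obtain ⟨A, hA, hfA⟩ : ∃ A : ℝ, 0 < A ∧
      ∫⁻ x, f x ∂μ ≤ ENNReal.ofReal A * μ (closedBall 0 1) := by
    have h_ball : μ (closedBall (0 : E) 1) ≠ 0 := (measure_closedBall_pos μ 0 one_pos).ne'
    have h_div : (∫⁻ x, f x ∂μ) / μ (closedBall 0 1) ≠ ⊤ := ENNReal.div_ne_top hf_int h_ball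
    refine ⟨((∫⁻ x, f x ∂μ) / μ (closedBall 0 1)).toReal + 1, by positivity, ?_⟩
    rw [← ENNReal.div_le_iff h_ball measure_closedBall_lt_top.ne]
    exact (ENNReal.le_ofReal_iff_toReal_le h_div (by positivity)).2
      (le_add_of_nonneg_right one_pos.le)
  have h_reverse := lintegral_mul_Ioo_le_localMaximal (D := 4) hf hf_int hA.le hfA
    measurable_uncurry_logWeight_elog_norm (fun _ hs _ _ h ↦ logWeight_elog_norm_le h hs.le)
  calc ∫⁻ x, ENNReal.ofReal (f x * (1 + log⁺ (elog (f x) / elog ‖x‖))) ∂μ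
      ≤ ∫⁻ x, (ENNReal.ofReal (1 + Real.log (1 + elog A)) * f x + f x *
          ∫⁻ s in Ioo A (f x), ENNReal.ofReal s⁻¹ * logWeight (elog ‖x‖) s) ∂μ := by
        refine lintegral_mono fun x ↦ ?_
        rw [ENNReal.ofReal_mul (f x).coe_nonneg, ENNReal.ofReal_coe_nnreal,
          mul_comm _ (f x : ℝ≥0∞), ← mul_add, ENNReal.ofReal_add zero_le_one Real.posLog_nonneg,
          ENNReal.ofReal_add zero_le_one (Real.log_nonneg (by linarith [elog_pos hA.le])),
          add_assoc]
        gcongr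
        exact ofReal_posLog_le_lintegral (one_le_elog (norm_nonneg x)) hA (f x).coe_nonneg
    _ = ENNReal.ofReal (1 + Real.log (1 + elog A)) * ∫⁻ x, f x ∂μ + ∫⁻ x, f x *
          (∫⁻ s in Ioo A (f x), ENNReal.ofReal s⁻¹ * logWeight (elog ‖x‖) s) ∂μ := by
        rw [lintegral_add_left' (by fun_prop), lintegral_const_mul' _ _ ENNReal.ofReal_ne_top]
    _ ≤ ENNReal.ofReal (1 + Real.log (1 + elog A)) * ∫⁻ x, f x ∂μ +
          5 ^ finrank ℝ E * (4 : ℝ≥0) * (2 * (ENNReal.ofReal (max 1 (3 ^ finrank ℝ E)) *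
            ∫⁻ x, ENNReal.ofReal
              (musielak (elog ‖x‖) (localMaximal μ (fun y ↦ f y) x).toReal) ∂μ)) := by
        gcongr
        exact h_reverse.trans (mul_le_mul_right (lintegral_Ioo_logWeight_le μ
          (fun x ↦ one_le_elog (norm_nonneg x)) (fun _ ↦ toReal_nonneg) hA.le
          (by positivity)) _)
    _ < ⊤ := by finiteness

theorem local_stein_Llog_general {F : Type*} [NormedAddCommGroup F] {f : E → F}
    (hf : Integrable f μ) :
    ∫⁻ x, ENNReal.ofReal
        (musielak (elog ‖x‖) (localMaximal μ (fun y ↦ ‖f y‖ₑ) x).toReal) ∂μ < ⊤ ↔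
      ∫⁻ x, ENNReal.ofReal (‖f x‖ * (1 + log⁺ (elog ‖f x‖ / elog ‖x‖))) ∂μ < ⊤ :=
  have hf_meas : AEMeasurable (fun x ↦ ‖f x‖₊) μ := hf.1.nnnorm.aemeasurable
  ⟨lintegral_mul_posLog_lt_top hf_meas hf.2.ne, lintegral_musielak_localMaximal_lt_top hf_meas⟩

end Llog

theorem volume_real_ball_zero_one_pos (n : ℕ) : 0 < volume.real (ball (0 : En n) 1) :=
  ENNReal.toReal_pos (measure_ball_pos volume 0 one_pos).ne' measure_ball_lt_top.ne

theorem inv_pow_mul_setIntegral_ball_eq {n : ℕ} {f : En n → ℝ} (hf : Integrable f) (x : En n)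
    {r : ℝ} (hr : 0 < r) :
    (r ^ n)⁻¹ * ∫ y in ball x r, |f y| =
      volume.real (ball (0 : En n) 1) * (⨍⁻ y in ball x r, ‖f y‖ₑ ∂volume).toReal := by
  have h_unit := volume_real_ball_zero_one_pos n
  have h_ball : (volume (ball x r)).toReal = r ^ n * volume.real (ball (0 : En n) 1) := by
    rw [Measure.addHaar_ball_of_pos volume x hr, ENNReal.toReal_mul,
      ENNReal.toReal_ofReal (by positivity), finrank_euclideanSpace_fin, measureReal_def]
  rw [setLAverage_eq, ENNReal.toReal_div, h_ball, ← integral_norm_eq_lintegral_enorm hf.1.restrict]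
  simp only [Real.norm_eq_abs]
  field_simp

theorem Mloc_eq_mul_localMaximal {n : ℕ} {f : En n → ℝ} (hf : Integrable f) (x : En n) :
    Mloc n f x =
      volume.real (ball (0 : En n) 1) * (localMaximal volume (fun y ↦ ‖f y‖ₑ) x).toReal := by
  have h_finite (r : Ioo (0 : ℝ) 1) : ⨍⁻ y in ball x (r : ℝ), ‖f y‖ₑ ∂volume ≠ ⊤ := by
    rw [setLAverage_eq]
    exact ENNReal.div_ne_top hf.integrableOn.2.ne (measure_ball_pos volume x r.2.1).ne'
  rw [localMaximal, ENNReal.toReal_iSup h_finite, Real.mul_iSup_of_nonneg measureReal_nonneg]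
  exact iSup_congr fun r ↦ inv_pow_mul_setIntegral_ball_eq hf x r.2.1

theorem lintegral_Psi_Mloc_lt_top_iff {n : ℕ} {f : En n → ℝ} (hf : Integrable f) :
    ∫⁻ x, ENNReal.ofReal (Psi n x (Mloc n f x)) < ⊤ ↔
      ∫⁻ x, ENNReal.ofReal
        (musielak (elog ‖x‖) (localMaximal volume (fun y ↦ ‖f y‖ₑ) x).toReal) < ⊤ := by
  simp only [Mloc_eq_mul_localMaximal hf]
  exact lintegral_musielak_mul_lt_top_iff (fun x ↦ one_le_elog (norm_nonneg x))
    (fun _ ↦ toReal_nonneg) (volume_real_ball_zero_one_pos n)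

/-- **Characterization of `M^loc f ∈ L_log(ℝ^n)` for integrable `f`.**
`∫ Ψ(x, M^loc f(x)) dx < ∞` iff
`∫ |f(x)| (1 + ln₊( ln(e+|f(x)|) / ln(e+|x|) )) dx < ∞`. -/
theorem local_stein_Llog (n : ℕ) (hn : 1 ≤ n) (f : En n → ℝ) (hf : Integrable f) :
    ∫⁻ x, ENNReal.ofReal (Psi n x (Mloc n f x)) < ⊤ ↔
      ∫⁻ x, ENNReal.ofReal (|f x| *
        (1 + lnp (Real.log (Real.exp 1 + |f x|) / Real.log (Real.exp 1 + ‖x‖)))) < ⊤ := by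
  simp only [lnp, max_comm _ (0 : ℝ)]
  exact (lintegral_Psi_Mloc_lt_top_iff hf).trans (local_stein_Llog_general hf)
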